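/- Let L be a finite lattice and let (J(L), ≤, M) be its join-presentation, where M(j) is the set of minimal join-covers of j. Then this presentation is transitive: for every j ∈ J(L), every C ∈ M(j), and every family {D_c | c ∈ C} with D_c ∈ M(c) for each c ∈ C, there exists E ∈ M(j) with E ≪ ⋃_{c∈C} D_c. -/

import Mathlib

/-- The refinement relation: `A ≪ B` iff every element of `A` is below some element of `B`. -/
def Refines {L : Type*} [Preorder L] (A B : Set L) : Prop :=
  ∀ a ∈ A, ∃ b ∈ B, a ≤ b

/-- An element `j ≠ ⊥` is join-irreducible if `j = a ∨ b` implies `j = a` or `j = b`. -/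
def JoinIrr {L : Type*} [Lattice L] [OrderBot L] (j : L) : Prop :=
  j ≠ ⊥ ∧ ∀ a b : L, j = a ⊔ b → j = a ∨ j = b

/-- `C` is a minimal join-cover of `a`: `C` is a join-cover of `a` (`a ≤ ⋁C`), `C` is an
`≤`-antichain, and every `≤`-antichain `D` with `a ≤ ⋁D` and `D ≪ C` equals `C`. -/
def MinJoinCover {L : Type*} [CompleteLattice L] (a : L) (C : Set L) : Prop :=
  a ≤ sSup C ∧ IsAntichain (· ≤ ·) C ∧
    ∀ D : Set L, IsAntichain (· ≤ ·) D → a ≤ sSup D → Refines D C → D = C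

/-!
For a well-founded order, the Dershowitz–Manna order on finite multisets is well-founded, and a
finite antichain that refines another finite set without being equal to it is strictly smaller in
this order. Hence any join-cover of a compact element refines to a minimal one: pass to a finite
subcover, and take a Dershowitz–Manna-minimal one among the finite covers refining it. Transitivity
is the case of the cover `⋃ c ∈ C, D c`.
-/

namespace Refines

section Preorder

variable {L : Type*} [Preorder L] {A B C : Set L}

theorem of_subset (h : A ⊆ B) : Refines A B :=
  IsCofinalFor.of_subset h

theorem trans (hAB : Refines A B) (hBC : Refines B C) : Refines A C :=
  IsCofinalFor.trans hAB hBC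

end Preorder

section PartialOrder

variable {L : Type*} [PartialOrder L]

theorem eq_of_subset_of_isAntichain {A B : Set L} (hAB : Refines A B)
    (hBA : B ⊆ A) (hA : IsAntichain (· ≤ ·) A) : A = B := by
  refine Set.Subset.antisymm (fun a ha => ?_) hBA
  obtain ⟨b, hb, hab⟩ := hAB a ha
  exact hA.eq ha (hBA hb) hab ▸ hb

theorem isDershowitzMannaLT {s t : Finset L} (hst : Refines (s : Set L) t)
    (hs : IsAntichain (· ≤ ·) (s : Set L)) (hne : s ≠ t) :
    Multiset.IsDershowitzMannaLT s.val t.val := by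
  classical
  have hdiff : (t \ s).val ≠ 0 := fun h => by
    have hts : t ⊆ s := Finset.sdiff_eq_empty_iff_subset.mp (Finset.val_eq_zero.mp h)
    exact hne (Finset.coe_injective
      (hst.eq_of_subset_of_isAntichain (Finset.coe_subset.mpr hts) hs))
  refine ⟨(s ∩ t).val, (s \ t).val, (t \ s).val, hdiff, ?_, ?_, fun x hx => ?_⟩
  · rw [Finset.inter_val, Finset.sdiff_val, add_comm, Multiset.sub_add_inter]
  · rw [Finset.inter_comm, Finset.inter_val, Finset.sdiff_val, add_comm, Multiset.sub_add_inter]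
  · obtain ⟨hxs, hxt⟩ := Finset.mem_sdiff.mp hx
    obtain ⟨y, hyt, hxy⟩ := hst x hxs
    have hlt : x < y := hxy.lt_of_ne fun h => hxt (h ▸ hyt)
    have hys : y ∉ s := fun hys => hs.not_lt hxs hys hlt
    exact ⟨y, Finset.mem_sdiff.mpr ⟨hyt, hys⟩, hlt⟩

end PartialOrder

theorem sSup_le_sSup {L : Type*} [CompleteLattice L] {A B : Set L} (h : Refines A B) :
    sSup A ≤ sSup B :=
  sSup_le_sSup_of_isCofinalFor h

end Refines

theorem exists_subset_isAntichain_refines {L : Type*} [PartialOrder L] (s : Finset L) :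
    ∃ t ⊆ s, IsAntichain (· ≤ ·) (t : Set L) ∧ Refines (s : Set L) t := by
  classical
  refine ⟨{m ∈ s | Maximal (· ∈ s) m}, Finset.filter_subset _ _, ?_, fun x hx => ?_⟩
  · refine (setOfPred_maximal_antichain (· ∈ s)).subset fun m hm => ?_
    exact (Finset.mem_filter.mp hm).2
  · obtain ⟨m, hxm, hm⟩ := s.exists_le_maximal hx
    exact ⟨m, Finset.mem_filter.mpr ⟨hm.prop, hm⟩, hxm⟩

section CompleteLattice

variable {L : Type*} [CompleteLattice L] {a : L}

theorem exists_finset_isAntichain_le_sSup (ha : IsCompactElement a) {U : Set L} (hU : a ≤ sSup U) :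
    ∃ t : Finset L, (t : Set L) ⊆ U ∧ IsAntichain (· ≤ ·) (t : Set L) ∧ a ≤ sSup (t : Set L) := by
  obtain ⟨s, hsU, has⟩ :=
    (CompleteLattice.isCompactElement_iff_exists_le_sSup_of_le_sSup L a).mp ha U hU
  obtain ⟨t, hts, ht, hst⟩ := exists_subset_isAntichain_refines s
  rw [Finset.sup_id_eq_sSup] at has
  exact ⟨t, (Finset.coe_subset.mpr hts).trans hsU, ht, has.trans hst.sSup_le_sSup⟩

theorem MinJoinCover.of_finset (ha : IsCompactElement a) {C : Set L} (hC : a ≤ sSup C)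
    (hmin : ∀ t : Finset L, IsAntichain (· ≤ ·) (t : Set L) → a ≤ sSup (t : Set L) →
      Refines (t : Set L) C → (t : Set L) = C) :
    MinJoinCover a C := by
  refine ⟨hC, ?_, fun D hD haD hDC => ?_⟩
  · obtain ⟨t, htC, ht, hat⟩ := exists_finset_isAntichain_le_sSup ha hC
    exact hmin t ht hat (.of_subset htC) ▸ ht
  · obtain ⟨t, htD, ht, hat⟩ := exists_finset_isAntichain_le_sSup ha haD
    have htC : (t : Set L) = C := hmin t ht hat ((Refines.of_subset htD).trans hDC)
    exact hDC.eq_of_subset_of_isAntichain (htC ▸ htD) hD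

theorem exists_minJoinCover_refines [WellFoundedLT L] (ha : IsCompactElement a) {U : Set L}
    (hU : a ≤ sSup U) : ∃ E : Set L, MinJoinCover a E ∧ Refines E U := by
  let P : Set (Finset L) := {s | a ≤ sSup (s : Set L) ∧ Refines (s : Set L) U}
  have hP : P.Nonempty := by
    obtain ⟨s, hsU, -, has⟩ := exists_finset_isAntichain_le_sSup ha hU
    exact ⟨s, has, .of_subset hsU⟩
  obtain ⟨s, ⟨has, hsU⟩, hs⟩ :=
    (InvImage.wf Finset.val Multiset.wellFounded_isDershowitzMannaLT).has_min P hP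
  refine ⟨s, .of_finset ha has fun t ht hat hts => ?_, hsU⟩
  by_contra hne
  exact hs t ⟨hat, hts.trans hsU⟩ (hts.isDershowitzMannaLT ht (mt (congrArg _) hne))

theorem le_sSup_biUnion {C : Set L} {D : L → Set L} (hC : a ≤ sSup C)
    (hD : ∀ c ∈ C, c ≤ sSup (D c)) : a ≤ sSup (⋃ c ∈ C, D c) :=
  hC.trans <| sSup_le fun c hc =>
    (hD c hc).trans (sSup_le_sSup (Set.subset_biUnion_of_mem hc))

theorem joinPresentation_transitive_general [WellFoundedLT L] (ha : IsCompactElement a)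
    {C : Set L} (hC : a ≤ sSup C) {D : L → Set L} (hD : ∀ c ∈ C, c ≤ sSup (D c)) :
    ∃ E : Set L, MinJoinCover a E ∧ Refines E (⋃ c ∈ C, D c) :=
  exists_minJoinCover_refines ha (le_sSup_biUnion hC hD)

theorem isCompactElement_of_wellFoundedGT [WellFoundedGT L] (a : L) : IsCompactElement a :=
  (CompleteLattice.isSupFiniteCompact_iff_all_elements_compact L).mp
    (CompleteLattice.WellFoundedGT.isSupFiniteCompact L) a

end CompleteLattice

/-- The join-presentation of a finite lattice is transitive: for every
join-irreducible `j`, every minimal join-cover `C` of `j`, and every family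
`{D_c | c ∈ C}` of minimal join-covers `D_c` of `c`, there is a minimal join-cover
`E` of `j` with `E ≪ ⋃_{c ∈ C} D_c`. -/
theorem joinPresentation_transitive {L : Type*} [CompleteLattice L] [Fintype L]
    (j : L) (hj : JoinIrr j) (C : Set L) (hC : MinJoinCover j C)
    (D : L → Set L) (hD : ∀ c ∈ C, MinJoinCover c (D c)) :
    ∃ E : Set L, MinJoinCover j E ∧ Refines E (⋃ c ∈ C, D c) :=
  joinPresentation_transitive_general (isCompactElement_of_wellFoundedGT j) hC.1
    fun c hc => (hD c hc).1
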